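/- Let χ be an irreducible character of a finite group G whose kernel ker(χ) is not nilpotent. Then there exists an irreducible character ξ of G such that ker(ξ) is strictly contained in ker(χ) and cod(ξ) > cod(χ). -/

import Mathlib

open CategoryTheory

/-- The kernel of (the character of) a finite-dimensional complex representation. -/
noncomputable def charKer {G : Type} [Group G] (V : FDRep ℂ G) : Subgroup G :=
  MonoidHom.ker (Representation.asGroupHom V.ρ)

/-- The codegree of a character: `|G : ker χ| / χ(1)`. -/
noncomputable def codeg {G : Type} [Group G] (V : FDRep ℂ G) : ℕ :=
  (charKer V).index / Module.finrank ℂ V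

/-- The set of codegrees of irreducible characters of `G`. -/
def codSet (G : Type) [Group G] : Set ℕ :=
  {n | ∃ V : FDRep ℂ G, Simple V ∧ codeg V = n}

/-- Inner product of class functions on a finite group. -/
noncomputable def innerChar (G : Type) [Group G] (f g : G → ℂ) : ℂ :=
  (∑ᶠ x : G, f x * starRingEnd ℂ (g x)) / Nat.card G

open scoped Classical in
/-- The induced character `θ^G` of a character `θ` of a subgroup `H ≤ G`. -/
noncomputable def indChar {G : Type} [Group G] (H : Subgroup G) (θ : FDRep ℂ ↥H) : G → ℂ :=
  fun g => (∑ᶠ x : G, if h : x * g * x⁻¹ ∈ H then θ.character ⟨x * g * x⁻¹, h⟩ else 0) /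
    Nat.card ↥H

/-!
Let `K = ker χ`. If `K` is not nilpotent, some Sylow subgroup of `K` is not normal, and a maximal
subgroup `M` of `G` containing its normalizer satisfies `MK = G` while `K ∩ M` has normal closure
`K`. Let `V` afford `χ` and let `ξ` be an irreducible constituent of the representation of `G` on
the functions `G / M → V` with sum zero, so that `ξ(1) ≤ (|G : M| - 1) χ(1)`.

Since `K` is transitive on `G / M` and acts trivially on `V`, a function fixed by `K` is constant,
hence zero if its sum is zero; so `K ≰ ker ξ`. If `ker ξ ≰ M`, then `ker ξ` is transitive on
`G / M` and a function in `ξ` is determined by its value at the base point; so `K ∩ M ≤ ker ξ`,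
and `K ≤ ker ξ` by the choice of `M`, a contradiction. Thus `ker ξ ≤ M`, and by irreducibility of
`V` the functions in `ξ` take every value at the base point, whence `ker ξ ≤ K`. Therefore
`|G : ker ξ| ≥ |G : K ∩ M| = |G : K| |G : M|`, and dividing by `ξ(1) < |G : M| χ(1)` gives
`cod ξ > cod χ`. As codegrees are natural-number quotients, the last step also uses that `ξ(1)`
divides `|G : ker ξ|`.
-/

universe u

section Irreducible

variable {k G H V : Type*} [Field k] [Monoid G] [Monoid H] [AddCommGroup V] [Module k V]

theorem isIrreducible_iff_forall_submodule (ρ : Representation k G V) :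
    ρ.IsIrreducible ↔ Nontrivial V ∧
      ∀ p : Submodule k V, (∀ g, ∀ v ∈ p, ρ g v ∈ p) → p = ⊥ ∨ p = ⊤ := by
  constructor
  · intro hρ
    have hV : Nontrivial ρ.asModule := IsSimpleModule.nontrivial (MonoidAlgebra k G) ρ.asModule
    exact ⟨hV, fun p hp => (hρ.eq_bot_or_eq_top ⟨p, fun g v hv => hp g v hv⟩).imp
      (congrArg Subrepresentation.toSubmodule) (congrArg Subrepresentation.toSubmodule)⟩
  · rintro ⟨hV, hp⟩
    have : Nontrivial (Subrepresentation ρ) :=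
      ⟨⊥, ⊤, fun h => bot_ne_top (congrArg Subrepresentation.toSubmodule h)⟩
    exact ⟨fun s => (hp s.toSubmodule fun g _ hv => s.apply_mem_toSubmodule g hv).imp
      (fun h => Subrepresentation.toSubmodule_injective h)
      (fun h => Subrepresentation.toSubmodule_injective h)⟩

theorem nontrivial_of_isIrreducible (ρ : Representation k G V) [hρ : ρ.IsIrreducible] :
    Nontrivial V :=
  ((isIrreducible_iff_forall_submodule ρ).1 hρ).1

theorem isIrreducible_of_comp {σ : Representation k H V} {f : G →* H}
    (hσ : Representation.IsIrreducible (σ.comp f)) : σ.IsIrreducible := by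
  rw [isIrreducible_iff_forall_submodule] at hσ ⊢
  exact ⟨hσ.1, fun p hp => hσ.2 p fun g => hp (f g)⟩

theorem isIrreducible_toRepresentation_of_isAtom {ρ : Representation k G V}
    {s : Subrepresentation ρ} (hs : IsAtom s) : s.toRepresentation.IsIrreducible := by
  have s_ne_bot : s.toSubmodule ≠ ⊥ := fun h => hs.1 (Subrepresentation.toSubmodule_injective h)
  refine (isIrreducible_iff_forall_submodule _).2
    ⟨Submodule.nontrivial_iff_ne_bot.2 s_ne_bot, fun p hp => ?_⟩
  let t : Subrepresentation ρ :=
    { toSubmodule := p.map s.toSubmodule.subtype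
      apply_mem_toSubmodule := by
        rintro g _ ⟨v, hv, rfl⟩
        exact ⟨_, hp g v hv, rfl⟩ }
  have t_le : t ≤ s := Submodule.map_subtype_le _ p
  refine (hs.le_iff.1 t_le).imp (fun h => ?_) (fun h => ?_)
  · exact Submodule.map_injective_of_injective s.toSubmodule.injective_subtype
      ((congrArg Subrepresentation.toSubmodule h).trans (Submodule.map_bot _).symm)
  · exact Submodule.map_injective_of_injective s.toSubmodule.injective_subtype
      ((congrArg Subrepresentation.toSubmodule h).trans (Submodule.map_subtype_top _).symm)

theorem ne_bot_of_isIrreducible_toRepresentation {ρ : Representation k G V}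
    {s : Subrepresentation ρ} (hs : s.toRepresentation.IsIrreducible) : s ≠ ⊥ := by
  rintro rfl
  exact Submodule.nontrivial_iff_ne_bot.1
    (nontrivial_of_isIrreducible (⊥ : Subrepresentation ρ).toRepresentation) rfl

theorem exists_le_isIrreducible_toRepresentation [FiniteDimensional k V]
    {ρ : Representation k G V} {s : Subrepresentation ρ} (hs : s ≠ ⊥) :
    ∃ t ≤ s, t.toRepresentation.IsIrreducible := by
  have wf : WellFounded ((· < ·) : Subrepresentation ρ → Subrepresentation ρ → Prop) :=
    InvImage.wf Subrepresentation.toSubmodule wellFounded_lt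
  have : IsAtomic (Subrepresentation ρ) := isAtomic_of_orderBot_wellFounded_lt wf
  obtain ⟨t, ht, hts⟩ := (eq_bot_or_exists_atom_le s).resolve_left hs
  exact ⟨t, hts, isIrreducible_toRepresentation_of_isAtom ht⟩

end Irreducible

section SimpleFDRep

theorem isIrreducible_of_simple {k : Type u} {G : Type*} [Field k] [Monoid G] (V : FDRep k G)
    [Simple V] : Representation.IsIrreducible V.ρ := by
  refine (isIrreducible_iff_forall_submodule _).2 ⟨?_, fun p hp => ?_⟩
  · by_contra hV
    rw [not_nontrivial_iff_subsingleton] at hV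
    refine id_nonzero V ?_
    ext x
    exact Subsingleton.elim (α := V) _ _
  let s : Subrepresentation V.ρ := ⟨p, fun g v hv => hp g v hv⟩
  let ι : FDRep.of s.toRepresentation ⟶ V := ⟨FGModuleCat.ofHom p.subtype, fun g => by ext x; rfl⟩
  have : Mono ι := ConcreteCategory.mono_of_injective ι Subtype.val_injective
  refine (eq_or_ne ι 0).imp (fun hι => ?_) (fun hι => ?_)
  · refine (Submodule.eq_bot_iff p).2 fun v hv => ?_
    exact congrArg (fun f : FDRep.of s.toRepresentation ⟶ V => f.hom.hom.hom ⟨v, hv⟩) hι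
  · have : IsIso ι := isIso_of_mono_of_nonzero hι
    refine Submodule.eq_top_iff'.2 fun v => ?_
    have hv : ι.hom.hom.hom ((inv ι).hom.hom.hom v) = v :=
      congrArg (fun f : V ⟶ V => f.hom.hom.hom v) (IsIso.inv_hom_id ι)
    exact hv ▸ Subtype.property (p := (· ∈ p)) _

theorem simple_of_isIrreducible {k G V : Type u} [Field k] [IsAlgClosed k] [CharZero k] [Group G]
    [Finite G] [AddCommGroup V] [Module k V] [FiniteDimensional k V] (ρ : Representation k G V)
    [ρ.IsIrreducible] : Simple (FDRep.of ρ) := by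
  have := Fintype.ofFinite G
  have := invertibleOfNonzero (NeZero.ne (Nat.card G : k))
  have norm_one := ρ.card_inv_mul_sum_char_mul_char_eq_finrank ρ
  rw [Representation.IsIrreducible.finrank_intertwiningMap_self, Nat.cast_one,
    inv_mul_eq_one₀ (NeZero.ne _)] at norm_one
  exact (FDRep.simple_iff_char_is_norm_one _).2 norm_one.symm

end SimpleFDRep

section Degree

variable {k G V : Type*} [Field k] [AddCommGroup V] [Module k V]

theorem isIntegral_trace_of_isIntegral [IsAlgClosed k] [FiniteDimensional k V]
    {f : Module.End k V} (hf : IsIntegral ℤ f) : IsIntegral ℤ (LinearMap.trace k V f) := by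
  obtain ⟨p, p_monic, hp⟩ := hf
  rw [Module.End.trace_eq_sum_roots_charpoly_of_splits (IsAlgClosed.splits _)]
  refine IsIntegral.multiset_sum fun x hx => ⟨p, p_monic, ?_⟩
  have x_root : (minpoly k f).IsRoot x := by
    rw [← Module.End.hasEigenvalue_iff_isRoot, Module.End.hasEigenvalue_iff_isRoot_charpoly]
    exact Polynomial.isRoot_of_mem_roots hx
  have minpoly_dvd : minpoly k f ∣ p.map (algebraMap ℤ k) := by
    refine minpoly.dvd k f ?_
    rwa [Polynomial.aeval_map_algebraMap]
  rw [← Polynomial.eval_map]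
  exact x_root.dvd minpoly_dvd

theorem isIntegral_character [Group G] [Finite G] [IsAlgClosed k] [FiniteDimensional k V]
    (ρ : Representation k G V) (g : G) : IsIntegral ℤ (ρ.character g) := by
  refine isIntegral_trace_of_isIntegral (IsIntegral.of_pow (Nat.card_pos (α := G)) ?_)
  rw [← map_pow, pow_card_eq_one', map_one]
  exact isIntegral_one

theorem isIntegral_sum_smul [Monoid G] [Fintype G] (ρ : Representation k G V) {a : G → k}
    (ha : ∀ g, IsIntegral ℤ (a g)) : IsIntegral ℤ (∑ g, a g • ρ g) := by
  let O := integralClosure ℤ k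
  let φ : MonoidAlgebra O G →ₐ[O] Module.End k V := MonoidAlgebra.lift O (Module.End k V) G ρ
  let e : MonoidAlgebra O G := ∑ g, MonoidAlgebra.single g ⟨a g, ha g⟩
  have φ_e : φ e = ∑ g, a g • ρ g := by
    simp only [φ, e, map_sum, MonoidAlgebra.lift_single]
    rfl
  rw [← φ_e]
  exact isIntegral_trans (A := O) _ ((Algebra.IsIntegral.isIntegral e).map φ)

theorem commute_sum_character_inv_smul [Group G] [Fintype G] (ρ : Representation k G V) (x : G) :
    Commute (∑ g, ρ.character g⁻¹ • ρ g) (ρ x) := by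
  simp only [commute_iff_eq, Finset.sum_mul, Finset.mul_sum, smul_mul_assoc, mul_smul_comm,
    ← map_mul]
  refine Fintype.sum_equiv (MulAut.conj x⁻¹).toEquiv _ _ fun g => ?_
  have conj_inv : ((MulAut.conj x⁻¹).toEquiv g)⁻¹ = x⁻¹ * g⁻¹ * x⁻¹⁻¹ := by simp [mul_assoc]
  rw [conj_inv, ρ.char_conj]
  simp [mul_assoc]

theorem exists_eq_algebraMap_of_forall_commute [Monoid G] [IsAlgClosed k] [FiniteDimensional k V]
    (ρ : Representation k G V) [ρ.IsIrreducible] {f : Module.End k V}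
    (hf : ∀ g, Commute f (ρ g)) : ∃ c, f = algebraMap k (Module.End k V) c := by
  obtain ⟨c, hc⟩ := Representation.IsIrreducible.algebraMap_intertwiningMap_bijective_of_isAlgClosed
    (ρ := ρ) |>.2 ⟨f, hf⟩
  exact ⟨c, (congrArg Representation.IntertwiningMap.toLinearMap hc).symm⟩

theorem sum_character_inv_smul_eq_algebraMap [Group G] [Fintype G] [NeZero (Nat.card G : k)]
    [IsAlgClosed k] [FiniteDimensional k V] (ρ : Representation k G V) [ρ.IsIrreducible] :
    ∑ g, ρ.character g⁻¹ • ρ g =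
      algebraMap k (Module.End k V) (Nat.card G / Module.finrank k V) := by
  have := invertibleOfNonzero (NeZero.ne (Nat.card G : k))
  have sum_eq_card : ∑ g, ρ.character g * ρ.character g⁻¹ = Nat.card G := by
    have h := ρ.card_inv_mul_sum_char_mul_char_eq_finrank ρ
    rw [Representation.IsIrreducible.finrank_intertwiningMap_self, Nat.cast_one,
      inv_mul_eq_one₀ (NeZero.ne _)] at h
    exact h.symm
  obtain ⟨c, hc⟩ := exists_eq_algebraMap_of_forall_commute ρ (commute_sum_character_inv_smul ρ)
  have trace_eq : c * Module.finrank k V = Nat.card G := by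
    have h := congrArg (LinearMap.trace k V) hc
    simp only [map_sum, map_smul, Algebra.algebraMap_eq_smul_one, LinearMap.trace_one,
      smul_eq_mul] at h
    rw [← h, ← sum_eq_card]
    exact Finset.sum_congr rfl fun g _ => mul_comm _ _
  have finrank_ne_zero : (Module.finrank k V : k) ≠ 0 :=
    right_ne_zero_of_mul (trace_eq ▸ NeZero.ne (Nat.card G : k))
  rw [hc, eq_div_of_mul_eq finrank_ne_zero trace_eq]

theorem dvd_of_isIntegral_natCast_div [CharZero k] {m n : ℕ} (hn : n ≠ 0)
    (h : IsIntegral ℤ (m / n : k)) : n ∣ m := by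
  have cast_div : (m / n : k) = algebraMap ℚ k (m / n) := by simp
  rw [cast_div, isIntegral_algebraMap_iff (algebraMap ℚ k).injective] at h
  obtain ⟨q, hq⟩ := IsIntegrallyClosed.isIntegral_iff.1 h
  rw [eq_div_iff (Nat.cast_ne_zero.2 hn), eq_intCast] at hq
  have hq' : (m : ℤ) = n * q := by
    rw [mul_comm]
    exact_mod_cast hq.symm
  exact Int.natCast_dvd_natCast.1 ⟨q, hq'⟩

variable [Group G] [Finite G] [IsAlgClosed k] [CharZero k] [FiniteDimensional k V]

theorem finrank_dvd_natCard_of_isIrreducible (ρ : Representation k G V) [ρ.IsIrreducible] :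
    Module.finrank k V ∣ Nat.card G := by
  have := Fintype.ofFinite G
  have := nontrivial_of_isIrreducible ρ
  refine dvd_of_isIntegral_natCast_div (k := k) Module.finrank_pos.ne' ?_
  rw [← isIntegral_algebraMap_iff (FaithfulSMul.algebraMap_injective k (Module.End k V)),
    ← sum_character_inv_smul_eq_algebraMap ρ]
  exact isIntegral_sum_smul ρ fun g => isIntegral_character ρ g⁻¹

theorem finrank_dvd_index_ker_of_isIrreducible (ρ : Representation k G V) [ρ.IsIrreducible] :
    Module.finrank k V ∣ (MonoidHom.ker ρ).index := by
  let σ : Representation k (G ⧸ MonoidHom.ker ρ) V :=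
    QuotientGroup.lift _ ρ fun _ hg => MonoidHom.mem_ker.1 hg
  have : σ.IsIrreducible := isIrreducible_of_comp (f := QuotientGroup.mk' _) ‹ρ.IsIrreducible›
  exact finrank_dvd_natCard_of_isIrreducible σ

end Degree

section Codegree

variable {k G V W : Type*} [Field k] [Group G] [AddCommGroup V] [Module k V] [AddCommGroup W]
  [Module k W]

/-- The codegree `|G : ker ρ| / dim ρ` of a representation, as a quotient of natural numbers. It is
meant for irreducible `ρ` over an algebraically closed field of characteristic zero, where the
division is exact. -/
noncomputable def codegree (ρ : Representation k G V) : ℕ :=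
  (MonoidHom.ker ρ).index / Module.finrank k V

theorem codegree_lt_codegree [Finite G] [IsAlgClosed k] [CharZero k] [FiniteDimensional k V]
    [Nontrivial V] [FiniteDimensional k W] {ρ : Representation k G V} {σ : Representation k G W}
    [σ.IsIrreducible] {m : ℕ} (index_le : (MonoidHom.ker ρ).index * m ≤ (MonoidHom.ker σ).index)
    (finrank_le : Module.finrank k W + Module.finrank k V ≤ m * Module.finrank k V) :
    codegree ρ < codegree σ := by
  have := nontrivial_of_isIrreducible σ
  have hW : 0 < Module.finrank k W := Module.finrank_pos
  have hV : 0 < Module.finrank k V := Module.finrank_pos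
  obtain ⟨c, hc⟩ := finrank_dvd_index_ker_of_isIrreducible σ
  have c_pos : 0 < c :=
    Nat.pos_of_mul_pos_left (hc ▸ Nat.pos_of_ne_zero Subgroup.FiniteIndex.index_ne_zero)
  rw [codegree, codegree, hc, Nat.mul_div_cancel_left _ hW, Nat.div_lt_iff_lt_mul hV]
  by_contra! hle
  have : c * (Module.finrank k W + Module.finrank k V) ≤ c * Module.finrank k W := calc
    _ ≤ c * (m * Module.finrank k V) := Nat.mul_le_mul_left _ finrank_le
    _ = c * Module.finrank k V * m := by ring
    _ ≤ (MonoidHom.ker ρ).index * m := Nat.mul_le_mul_right _ hle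
    _ ≤ c * Module.finrank k W := by rwa [mul_comm c, ← hc]
  nlinarith [Nat.mul_pos c_pos hV]

end Codegree

section FunctionRep

variable {k G V : Type*} [Field k] [Group G] [AddCommGroup V] [Module k V]

theorem mem_ker_toRepresentation {ρ : Representation k G V} {s : Subrepresentation ρ}
    {g : G} : g ∈ MonoidHom.ker s.toRepresentation ↔ ∀ v ∈ s, ρ g v = v := by
  rw [MonoidHom.mem_ker, LinearMap.ext_iff, Subtype.forall]
  exact forall₂_congr fun _ _ => Subtype.ext_iff

variable (ρ : Representation k G V) (X : Type*) [MulAction G X]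

/-- The representation `(g f)(x) = ρ(g) f(g⁻¹ x)` on `V`-valued functions on a `G`-set `X`, i.e.
the tensor product of `ρ` with the permutation representation when `X` is finite. -/
def functionRep : Representation k G (X → V) where
  toFun g :=
    { toFun f x := ρ g (f (g⁻¹ • x))
      map_add' _ _ := by ext; simp
      map_smul' _ _ := by ext; simp }
  map_one' := by ext; simp
  map_mul' g h := by
    refine LinearMap.ext fun f => funext fun x => ?_
    simp [mul_smul]

theorem functionRep_apply (g : G) (f : X → V) (x : X) :
    functionRep ρ X g f x = ρ g (f (g⁻¹ • x)) :=
  rfl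

/-- The equivariant map summing the values of a `V`-valued function on a finite `G`-set. -/
def functionSum [Fintype X] : (functionRep ρ X).IntertwiningMap ρ where
  toLinearMap := ∑ x, LinearMap.proj x
  isIntertwining' g := by
    refine LinearMap.ext fun f => ?_
    simp only [LinearMap.comp_apply, LinearMap.sum_apply, LinearMap.proj_apply, functionRep_apply,
      map_sum]
    exact Equiv.sum_comp (MulAction.toPerm g⁻¹) fun x => ρ g (f x)

theorem functionSum_apply [Fintype X] (f : X → V) : functionSum ρ X f = ∑ x, f x :=
  LinearMap.sum_apply ..

theorem ker_functionSum_ne_bot [Fintype X] [Nontrivial X] [Nontrivial V] :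
    (functionSum ρ X).ker ≠ ⊥ := by
  classical
  obtain ⟨x, y, hxy⟩ := exists_pair_ne X
  obtain ⟨v, hv⟩ := exists_ne (0 : V)
  intro h
  have mem_ker : Pi.single x v - Pi.single y v ∈ (functionSum ρ X).ker := by
    simp [Representation.IntertwiningMap.mem_ker, functionSum_apply]
  have eq_zero : Pi.single x v - Pi.single y v = (0 : X → V) := by rwa [h] at mem_ker
  simpa [hxy, hv] using congrFun eq_zero x

theorem finrank_ker_functionSum_add [Fintype X] [Nonempty X] [FiniteDimensional k V] :
    Module.finrank k (functionSum ρ X).ker.toSubmodule + Module.finrank k V =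
      Nat.card X * Module.finrank k V := by
  classical
  have surjective : Function.Surjective (functionSum ρ X).toLinearMap := fun v =>
    ⟨Pi.single (Classical.arbitrary X) v, (functionSum_apply ρ X _).trans (by simp)⟩
  have rank_nullity := (functionSum ρ X).toLinearMap.finrank_range_add_finrank_ker
  rwa [LinearMap.range_eq_top.2 surjective, finrank_top, add_comm, Module.finrank_pi_fintype,
    Finset.sum_const, Finset.card_univ, smul_eq_mul, ← Nat.card_eq_fintype_card] at rank_nullity

variable {ρ X}

theorem apply_smul_of_functionRep_eq_self {g : G} {f : X → V} (hf : functionRep ρ X g f = f)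
    (x : X) : f (g • x) = ρ g (f x) := by
  conv_lhs => rw [← hf, functionRep_apply, inv_smul_smul]

variable {s : Subrepresentation (functionRep ρ X)}

theorem exists_mem_apply_ne_zero [MulAction.IsPretransitive G X] (hs : s ≠ ⊥) (x : X) :
    ∃ f ∈ s, f x ≠ 0 := by
  contrapose! hs
  refine Subrepresentation.toSubmodule_injective ((Submodule.eq_bot_iff _).2 fun f hf => ?_)
  ext y
  obtain ⟨g, rfl⟩ := MulAction.exists_smul_eq G x y
  have apply_zero : ρ g⁻¹ (f (g • x)) = 0 := by
    simpa [functionRep_apply] using hs _ (s.apply_mem_toSubmodule g⁻¹ hf)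
  simpa using congrArg (ρ g) apply_zero

theorem not_ker_le_ker_toRepresentation [CharZero k] [Fintype X]
    [MulAction.IsPretransitive (MonoidHom.ker ρ) X] (hs : s ≠ ⊥)
    (hsum : s ≤ (functionSum ρ X).ker) :
    ¬ MonoidHom.ker ρ ≤ MonoidHom.ker s.toRepresentation := by
  intro hle
  refine hs (Subrepresentation.toSubmodule_injective ((Submodule.eq_bot_iff _).2 fun f hf => ?_))
  ext x
  have f_const : ∀ y, f y = f x := fun y => by
    obtain ⟨⟨g, hg⟩, rfl⟩ := MulAction.exists_smul_eq (MonoidHom.ker ρ) x y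
    rw [Subgroup.mk_smul,
      apply_smul_of_functionRep_eq_self (mem_ker_toRepresentation.1 (hle hg) f hf),
      MonoidHom.mem_ker.1 hg, Module.End.one_apply]
  have sum_zero : Fintype.card X • f x = 0 := by
    rw [← Finset.card_univ, ← Finset.sum_const, ← Finset.sum_congr rfl fun y _ => f_const y,
      ← functionSum_apply ρ]
    exact hsum hf
  rw [← Nat.cast_smul_eq_nsmul k, smul_eq_zero] at sum_zero
  have : Nonempty X := ⟨x⟩
  exact sum_zero.resolve_left (Nat.cast_ne_zero.2 Fintype.card_ne_zero)

-- A kernel transitive on `X` lets one correct any `g` to fix `x` without changing `ρ g`, so the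
-- values at `x` of the functions in `s` form an invariant subspace.
theorem exists_mem_apply_eq [ρ.IsIrreducible] [MulAction.IsPretransitive (MonoidHom.ker ρ) X]
    (hs : s ≠ ⊥) (x : X) (v : V) : ∃ f ∈ s, f x = v := by
  have : MulAction.IsPretransitive G X :=
    MulAction.IsPretransitive.of_smul_eq (MonoidHom.ker ρ).subtype rfl
  let values : Submodule k V := s.toSubmodule.map (LinearMap.proj x)
  have values_invariant : ∀ g, ∀ w ∈ values, ρ g w ∈ values := by
    rintro g _ ⟨f, hf, rfl⟩
    obtain ⟨⟨n, hn⟩, hnx⟩ := MulAction.exists_smul_eq (MonoidHom.ker ρ) x (g⁻¹ • x)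
    have fixes_x : (g * n)⁻¹ • x = x := by
      rw [inv_smul_eq_iff, mul_smul]
      exact (smul_inv_smul g x).symm.trans (congrArg (g • ·) hnx.symm)
    refine ⟨functionRep ρ X (g * n) f, s.apply_mem_toSubmodule _ hf, ?_⟩
    rw [LinearMap.proj_apply, functionRep_apply, fixes_x, map_mul, MonoidHom.mem_ker.1 hn, mul_one]
    rfl
  have values_ne_bot : values ≠ ⊥ := by
    obtain ⟨f, hf, hfx⟩ := exists_mem_apply_ne_zero hs x
    exact (Submodule.ne_bot_iff _).2 ⟨f x, ⟨f, hf, rfl⟩, hfx⟩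
  have values_eq_top := (((isIrreducible_iff_forall_submodule ρ).1 ‹_›).2 values
    values_invariant).resolve_left values_ne_bot
  exact Submodule.eq_top_iff'.1 values_eq_top v

theorem ker_toRepresentation_inf_stabilizer_le [ρ.IsIrreducible]
    [MulAction.IsPretransitive (MonoidHom.ker ρ) X] (hs : s ≠ ⊥) (x : X) :
    MonoidHom.ker s.toRepresentation ⊓ MulAction.stabilizer G x ≤ MonoidHom.ker ρ := by
  rintro g ⟨hg, hgx : g • x = x⟩
  refine MonoidHom.mem_ker.2 (LinearMap.ext fun v => ?_)
  obtain ⟨f, hf, rfl⟩ := exists_mem_apply_eq hs x v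
  rw [← apply_smul_of_functionRep_eq_self (mem_ker_toRepresentation.1 hg f hf), hgx,
    Module.End.one_apply]

theorem ker_inf_stabilizer_le_ker_toRepresentation
    [MulAction.IsPretransitive (MonoidHom.ker s.toRepresentation) X] (x : X) :
    MonoidHom.ker ρ ⊓ MulAction.stabilizer G x ≤ MonoidHom.ker s.toRepresentation := by
  rintro g ⟨hg, hgx⟩
  refine mem_ker_toRepresentation.2 fun f hf => ?_
  ext y
  obtain ⟨⟨n, hn⟩, rfl⟩ := MulAction.exists_smul_eq (MonoidHom.ker s.toRepresentation) x y
  have apply_smul : ∀ f' ∈ s, f' (n • x) = ρ n (f' x) := fun f' hf' =>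
    apply_smul_of_functionRep_eq_self (mem_ker_toRepresentation.1 hn f' hf') x
  have apply_x : functionRep ρ X g f x = f x := by
    rw [functionRep_apply, MonoidHom.mem_ker.1 hg, Module.End.one_apply,
      MulAction.mem_stabilizer_iff.1 (inv_mem hgx)]
  rw [Subgroup.mk_smul, apply_smul _ (s.apply_mem_toSubmodule g hf), apply_smul f hf, apply_x]

end FunctionRep

section Frattini

variable {G : Type*} [Group G] {M N : Subgroup G} [N.Normal]

theorem isPretransitive_of_codisjoint_stabilizer {X : Type*} [MulAction G X]
    [MulAction.IsPretransitive G X] {x : X} (h : Codisjoint (MulAction.stabilizer G x) N) :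
    MulAction.IsPretransitive N X := by
  refine (MulAction.isPretransitive_iff_base x).2 fun y => ?_
  obtain ⟨g, rfl⟩ := MulAction.exists_smul_eq G x y
  have hg : g ∈ N ⊔ MulAction.stabilizer G x := h.symm.eq_top ▸ Subgroup.mem_top g
  obtain ⟨n, hn, m, hm, rfl⟩ := Subgroup.mem_sup_of_normal_left.1 hg
  exact ⟨⟨n, hn⟩, by rw [mul_smul, MulAction.mem_stabilizer_iff.1 hm]; rfl⟩

theorem index_inf_of_codisjoint (h : Codisjoint M N) : (N ⊓ M).index = N.index * M.index := by
  rw [← Subgroup.relIndex_mul_index inf_le_right, Subgroup.inf_relIndex_right,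
    ← Subgroup.relIndex_sup_right, h.eq_top, Subgroup.relIndex_top_right]

-- `M` is a maximal subgroup containing the normalizer of a non-normal Sylow subgroup of `N`; both
-- claims are instances of the Frattini argument.
theorem exists_isCoatom_normalClosure_inf_eq [Finite G] (hN : ¬ Group.IsNilpotent N) :
    ∃ M : Subgroup G, IsCoatom M ∧ Codisjoint M N ∧
      Subgroup.normalClosure (N ⊓ M : Subgroup G) = N := by
  have exists_sylow : ∃ (p : ℕ) (_ : Fact p.Prime) (P : Sylow p N), ¬ (P : Subgroup N).Normal := by
    contrapose! hN
    exact (Group.isNilpotent_of_finite_tfae.out 0 3 rfl rfl).2 hN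
  obtain ⟨p, _, P, hP⟩ := exists_sylow
  let Q : Subgroup G := (P : Subgroup N).map N.subtype
  have normalizer_Q : (Subgroup.normalizer (Q : Set G)).subgroupOf N =
      Subgroup.normalizer ((P : Subgroup N) : Set N) := by
    rw [Subgroup.subgroupOf_normalizer_eq (Subgroup.map_subtype_le _), Subgroup.subgroupOf,
      Subgroup.comap_map_eq_self_of_injective N.subtype_injective]
  have normalizer_ne_top : Subgroup.normalizer (Q : Set G) ≠ ⊤ := fun h => by
    rw [h, Subgroup.top_subgroupOf] at normalizer_Q
    exact hP (Subgroup.normalizer_eq_top_iff.1 normalizer_Q.symm)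
  obtain ⟨M, hM, hQM⟩ := (eq_top_or_exists_le_coatom _).resolve_left normalizer_ne_top
  refine ⟨M, hM, (codisjoint_iff.2 P.normalizer_sup_eq_top).mono_left hQM,
    le_antisymm (Subgroup.normalClosure_le_normal inf_le_left) ?_⟩
  let L := Subgroup.normalClosure ((N ⊓ M : Subgroup G) : Set G)
  have normalizer_le : Subgroup.normalizer ((P : Subgroup N) : Set N) ≤ L.subgroupOf N := by
    intro n hn
    rw [← normalizer_Q] at hn
    exact Subgroup.subset_normalClosure ⟨n.2, hQM hn⟩
  have frattini := P.normalizer_sup_eq_top' (Subgroup.le_normalizer.trans normalizer_le)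
  exact Subgroup.subgroupOf_eq_top.1 ((sup_eq_right.2 normalizer_le).symm.trans frattini)

end Frattini

section Kernel

variable {k G V : Type*} [Field k] [Group G] [AddCommGroup V] [Module k V]
  {ρ : Representation k G V} [ρ.IsIrreducible]

theorem ker_toRepresentation_le_inf_stabilizer [CharZero k] {X : Type*} [MulAction G X]
    [MulAction.IsPretransitive G X] [Fintype X] {x : X} (hx : IsCoatom (MulAction.stabilizer G x))
    (codisjoint : Codisjoint (MulAction.stabilizer G x) (MonoidHom.ker ρ))
    (normalClosure_eq : Subgroup.normalClosure
      (MonoidHom.ker ρ ⊓ MulAction.stabilizer G x : Subgroup G) = MonoidHom.ker ρ)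
    {s : Subrepresentation (functionRep ρ X)} (hs : s ≠ ⊥) (hsum : s ≤ (functionSum ρ X).ker) :
    MonoidHom.ker s.toRepresentation ≤ MonoidHom.ker ρ ⊓ MulAction.stabilizer G x := by
  have := isPretransitive_of_codisjoint_stabilizer codisjoint
  have le_stabilizer : MonoidHom.ker s.toRepresentation ≤ MulAction.stabilizer G x := by
    by_contra not_le
    have := isPretransitive_of_codisjoint_stabilizer (hx.not_le_iff_codisjoint.1 not_le)
    exact not_ker_le_ker_toRepresentation hs hsum (normalClosure_eq.ge.trans
      (Subgroup.normalClosure_le_normal (ker_inf_stabilizer_le_ker_toRepresentation x)))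
  have inf_le := ker_toRepresentation_inf_stabilizer_le hs x
  rw [inf_of_le_left le_stabilizer] at inf_le
  exact le_inf inf_le le_stabilizer

variable (ρ) in
theorem exists_isIrreducible_ker_lt_and_codegree_lt [IsAlgClosed k] [CharZero k] [Finite G]
    [FiniteDimensional k V] (hρ : ¬ Group.IsNilpotent (MonoidHom.ker ρ)) :
    ∃ (M : Subgroup G) (s : Subrepresentation (functionRep ρ (G ⧸ M))),
      s.toRepresentation.IsIrreducible ∧ MonoidHom.ker s.toRepresentation < MonoidHom.ker ρ ∧
        codegree ρ < codegree s.toRepresentation := by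
  obtain ⟨M, hM, codisjoint, normalClosure_eq⟩ := exists_isCoatom_normalClosure_inf_eq hρ
  have := nontrivial_of_isIrreducible ρ
  have := Fintype.ofFinite (G ⧸ M)
  have : Nontrivial (G ⧸ M) := QuotientGroup.nontrivial_iff.2 hM.1
  have index_inf := index_inf_of_codisjoint codisjoint
  rw [← MulAction.stabilizer_quotient M] at hM codisjoint normalClosure_eq
  have := isPretransitive_of_codisjoint_stabilizer codisjoint
  obtain ⟨s, s_le, hs⟩ :=
    exists_le_isIrreducible_toRepresentation (ker_functionSum_ne_bot ρ (G ⧸ M))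
  have s_ne_bot := ne_bot_of_isIrreducible_toRepresentation hs
  have le_inf :=
    ker_toRepresentation_le_inf_stabilizer hM codisjoint normalClosure_eq s_ne_bot s_le
  rw [MulAction.stabilizer_quotient] at le_inf
  refine ⟨M, s, hs, lt_of_le_not_ge (le_inf.trans inf_le_left)
    (not_ker_le_ker_toRepresentation s_ne_bot s_le), codegree_lt_codegree (m := M.index) ?_ ?_⟩
  · exact index_inf.ge.trans (Subgroup.index_antitone le_inf)
  · exact (Nat.add_le_add_right (Submodule.finrank_mono s_le) _).trans_eq
      (finrank_ker_functionSum_add ρ (G ⧸ M))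

end Kernel

theorem stmt_8_general {k G : Type u} [Field k] [IsAlgClosed k] [CharZero k] [Group G] [Finite G]
    (χ : FDRep k G) [Simple χ] (hK : ¬ Group.IsNilpotent (MonoidHom.ker χ.ρ)) :
    ∃ ξ : FDRep k G, Simple ξ ∧ MonoidHom.ker ξ.ρ < MonoidHom.ker χ.ρ ∧
      codegree χ.ρ < codegree ξ.ρ := by
  have := isIrreducible_of_simple χ
  obtain ⟨M, s, _, ker_lt, codegree_lt⟩ := exists_isIrreducible_ker_lt_and_codegree_lt χ.ρ hK
  exact ⟨FDRep.of s.toRepresentation, simple_of_isIrreducible _, ker_lt, codegree_lt⟩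

theorem charKer_eq_ker {G : Type} [Group G] (V : FDRep ℂ G) : charKer V = MonoidHom.ker V.ρ := by
  ext g
  rw [charKer, MonoidHom.mem_ker, MonoidHom.mem_ker, ← Representation.asGroupHom_apply,
    Units.val_eq_one]

theorem codeg_eq_codegree {G : Type} [Group G] (V : FDRep ℂ G) : codeg V = codegree V.ρ := by
  rw [codeg, codegree, charKer_eq_ker]

theorem stmt_8 {G : Type} [Group G] [Finite G] (χ : FDRep ℂ G) (hχ : Simple χ)
    (hK : ¬ Group.IsNilpotent ↥(charKer χ)) :
    ∃ ξ : FDRep ℂ G, Simple ξ ∧ charKer ξ < charKer χ ∧ codeg χ < codeg ξ := by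
  rw [charKer_eq_ker] at hK
  simpa only [charKer_eq_ker, codeg_eq_codegree] using stmt_8_general χ hK
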